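/- Define (T v)(s) := ∫₀^s θ(s−1) v(θ) dθ + ∫_s^1 s(θ−1) v(θ) dθ and (R v)(s) := (d/ds)(T v)(s) for continuous v : [0,1] → ℝ. Then for all continuous v, w : [0,1] → ℝ, ∫₀¹ (T v)(s) · w(s) ds = −∫₀¹ (R v)(s) · (R w)(s) ds. -/

import Mathlib

/-!
Integrating by parts turns the Green's function formula into `T v s = ∫₀ˢ (V - m)`, where
`V s = ∫₀ˢ v` and `m` is the mean of `V`. Hence `R v = V - m` is the primitive of `v` with mean
zero, and `T v` is the primitive of `R v` that vanishes at both end points. Integrating `T v * w` by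
parts once more, with `R w` as primitive of `w`, leaves no boundary term. For integrable `v` and `w`
these integrations by parts rest on the absolute continuity of primitives.
-/

open MeasureTheory Set

section VectorValued

variable {E : Type*} [NormedAddCommGroup E] [NormedSpace ℝ E] {f : ℝ → E} {a b : ℝ}

theorem intervalIntegrable_primitive (hf : IntervalIntegrable f volume a b) :
    IntervalIntegrable (fun x ↦ ∫ t in a..x, f t) volume a b :=
  (intervalIntegral.continuousOn_primitive_interval' hf left_mem_uIcc).intervalIntegrable

/-- The primitive of `f` whose mean over `[a, b]` vanishes: the operator `R` of the theorem. -/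
noncomputable def centeredPrimitive (a b : ℝ) (f : ℝ → E) (s : ℝ) : E :=
  (∫ t in a..s, f t) - ⨍ x in a..b, ∫ t in a..x, f t

theorem continuousOn_centeredPrimitive (hf : IntervalIntegrable f volume a b) :
    ContinuousOn (centeredPrimitive a b f) (uIcc a b) :=
  (intervalIntegral.continuousOn_primitive_interval' hf left_mem_uIcc).sub continuousOn_const

variable [CompleteSpace E]

theorem derivWithin_primitive_of_continuousOn (hf : ContinuousOn f (Icc a b)) (hab : a < b) {s : ℝ}
    (hs : s ∈ Icc a b) : derivWithin (fun x ↦ ∫ t in a..x, f t) (Icc a b) s = f s := by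
  have : Fact (s ∈ Icc a b) := ⟨hs⟩
  exact intervalIntegral.derivWithin_integral_right
    ((hf.mono (Icc_subset_Icc_right hs.2)).intervalIntegrable_of_Icc hs.1)
    (hf.stronglyMeasurableAtFilter_nhdsWithin measurableSet_Icc s) (hf s hs)
    (uniqueDiffOn_Icc hab s hs)

theorem ae_deriv_primitive_eq (hf : IntervalIntegrable f volume a b) :
    ∀ᵐ x, x ∈ uIoc a b → deriv (fun y ↦ ∫ t in a..y, f t) x = f x := by
  filter_upwards [hf.ae_hasDerivAt_integral] with x hx hxab
  exact (hx (uIoc_subset_uIcc hxab) a left_mem_uIcc).deriv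

theorem integral_centeredPrimitive (hf : IntervalIntegrable f volume a b) :
    ∫ s in a..b, centeredPrimitive a b f s = 0 := by
  simp only [centeredPrimitive]
  rw [intervalIntegral.integral_sub (intervalIntegrable_primitive hf) intervalIntegrable_const,
    intervalIntegral.integral_const, interval_average_eq]
  rcases eq_or_ne a b with rfl | hab
  · simp
  · rw [smul_inv_smul₀ (sub_ne_zero.2 hab.symm), sub_self]

end VectorValued

section IntegrationByParts

variable {f g : ℝ → ℝ} {a b : ℝ}

theorem integral_primitive_mul (hf : IntervalIntegrable f volume a b)
    (hg : IntervalIntegrable g volume a b) :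
    ∫ x in a..b, (∫ t in a..x, f t) * g x =
      (∫ x in a..b, f x) * (∫ x in a..b, g x) - ∫ x in a..b, f x * ∫ t in a..x, g t := by
  have parts := (hf.absolutelyContinuousOnInterval_intervalIntegral
    left_mem_uIcc).integral_mul_deriv_eq_deriv_mul
      (hg.absolutelyContinuousOnInterval_intervalIntegral left_mem_uIcc)
  have left_eq : ∫ x in a..b, (∫ t in a..x, f t) * deriv (fun y ↦ ∫ t in a..y, g t) x =
      ∫ x in a..b, (∫ t in a..x, f t) * g x :=
    intervalIntegral.integral_congr_ae <|
      (ae_deriv_primitive_eq hg).mono fun x hx hxab ↦ by rw [hx hxab]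
  have right_eq : ∫ x in a..b, deriv (fun y ↦ ∫ t in a..y, f t) x * (∫ t in a..x, g t) =
      ∫ x in a..b, f x * ∫ t in a..x, g t :=
    intervalIntegral.integral_congr_ae <|
      (ae_deriv_primitive_eq hf).mono fun x hx hxab ↦ by rw [hx hxab]
  rw [left_eq, right_eq] at parts
  simpa only [intervalIntegral.integral_same, mul_zero, sub_zero] using parts

theorem integral_sub_mul_eq_integral_primitive (hf : IntervalIntegrable f volume a b) :
    ∫ x in a..b, (b - x) * f x = ∫ x in a..b, ∫ t in a..x, f t := by
  have parts := integral_primitive_mul (intervalIntegrable_const (c := (1 : ℝ))) hf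
  simp only [intervalIntegral.integral_const, smul_eq_mul, mul_one, one_mul] at parts
  have split : ∫ x in a..b, (b - x) * f x =
      (b - a) * (∫ x in a..b, f x) - ∫ x in a..b, (x - a) * f x := by
    rw [← intervalIntegral.integral_const_mul, ← intervalIntegral.integral_sub (hf.const_mul _)
      (hf.continuousOn_mul (by fun_prop))]
    exact intervalIntegral.integral_congr fun x _ ↦ by ring
  rw [split, parts, sub_sub_cancel]

end IntegrationByParts

section Dirichlet

variable {a b : ℝ} {v w : ℝ → ℝ}

/-- The solution operator of `u'' = v`, `u a = u b = 0`, written with its Green's function: the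
operator `T` of the theorem, on an arbitrary interval. -/
noncomputable def dirichletGreen (a b : ℝ) (v : ℝ → ℝ) (s : ℝ) : ℝ :=
  (∫ θ in a..s, (θ - a) * (s - b) / (b - a) * v θ) +
    ∫ θ in s..b, (s - a) * (θ - b) / (b - a) * v θ

theorem dirichletGreen_eq_integral_centeredPrimitive (hab : a ≠ b)
    (hv : IntervalIntegrable v volume a b) {s : ℝ} (hs : s ∈ uIcc a b) :
    dirichletGreen a b v s = ∫ x in a..s, centeredPrimitive a b v x := by
  have hvs : IntervalIntegrable v volume a s := hv.mono_set (uIcc_subset_uIcc_left hs)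
  have hvs' : IntervalIntegrable v volume s b := hv.mono_set (uIcc_subset_uIcc_right hs)
  have hba : b - a ≠ 0 := sub_ne_zero.2 hab.symm
  have kernel_left : ∫ θ in a..s, (θ - a) * (s - b) / (b - a) * v θ =
      (∫ θ in a..s, (s - θ) * v θ) - (s - a) / (b - a) * ∫ θ in a..s, (b - θ) * v θ := by
    rw [← intervalIntegral.integral_const_mul, ← intervalIntegral.integral_sub
      (hvs.continuousOn_mul (by fun_prop)) ((hvs.continuousOn_mul (by fun_prop)).const_mul _)]
    exact intervalIntegral.integral_congr fun θ _ ↦ by field_simp; ring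
  have kernel_right : ∫ θ in s..b, (s - a) * (θ - b) / (b - a) * v θ =
      -((s - a) / (b - a) * ∫ θ in s..b, (b - θ) * v θ) := by
    rw [← intervalIntegral.integral_const_mul, ← intervalIntegral.integral_neg]
    exact intervalIntegral.integral_congr fun θ _ ↦ by ring
  calc dirichletGreen a b v s
      = (∫ θ in a..s, (s - θ) * v θ) - (s - a) / (b - a) * ∫ θ in a..b, (b - θ) * v θ := by
        rw [dirichletGreen, kernel_left, kernel_right,
          ← intervalIntegral.integral_add_adjacent_intervals (hvs.continuousOn_mul (by fun_prop))
            (hvs'.continuousOn_mul (by fun_prop))]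
        ring
    _ = (∫ x in a..s, ∫ t in a..x, v t) - (s - a) / (b - a) * ∫ x in a..b, ∫ t in a..x, v t := by
        rw [integral_sub_mul_eq_integral_primitive hvs, integral_sub_mul_eq_integral_primitive hv]
    _ = ∫ x in a..s, centeredPrimitive a b v x := by
        simp only [centeredPrimitive]
        rw [intervalIntegral.integral_sub (intervalIntegrable_primitive hvs)
            intervalIntegrable_const, intervalIntegral.integral_const, interval_average_eq,
          smul_smul, smul_eq_mul, div_eq_mul_inv]

theorem derivWithin_dirichletGreen (hab : a < b) (hv : IntervalIntegrable v volume a b) {s : ℝ}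
    (hs : s ∈ Icc a b) :
    derivWithin (dirichletGreen a b v) (Icc a b) s = centeredPrimitive a b v s := by
  have green_eq : EqOn (dirichletGreen a b v) (fun s ↦ ∫ x in a..s, centeredPrimitive a b v x)
      (Icc a b) := fun _ hx ↦
    dirichletGreen_eq_integral_centeredPrimitive hab.ne hv (Icc_subset_uIcc hx)
  have cont := continuousOn_centeredPrimitive hv
  rw [uIcc_of_le hab.le] at cont
  rw [derivWithin_congr green_eq (green_eq hs), derivWithin_primitive_of_continuousOn cont hab hs]

theorem integral_dirichletGreen_mul (hab : a ≠ b) (hv : IntervalIntegrable v volume a b)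
    (hw : IntervalIntegrable w volume a b) :
    ∫ s in a..b, dirichletGreen a b v s * w s =
      -∫ s in a..b, centeredPrimitive a b v s * centeredPrimitive a b w s := by
  have hRv : IntervalIntegrable (centeredPrimitive a b v) volume a b :=
    (continuousOn_centeredPrimitive hv).intervalIntegrable
  have hW := intervalIntegral.continuousOn_primitive_interval' hw left_mem_uIcc
  calc ∫ s in a..b, dirichletGreen a b v s * w s
      = ∫ s in a..b, (∫ x in a..s, centeredPrimitive a b v x) * w s :=
        intervalIntegral.integral_congr fun s hs ↦ by
          simp only [dirichletGreen_eq_integral_centeredPrimitive hab hv hs]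
    _ = -∫ s in a..b, centeredPrimitive a b v s * ∫ t in a..s, w t := by
        rw [integral_primitive_mul hRv hw, integral_centeredPrimitive hv, zero_mul, zero_sub]
    _ = -∫ s in a..b, centeredPrimitive a b v s * centeredPrimitive a b w s := by
        -- The primitives of `w` differ by a constant, and `centeredPrimitive a b v` has mean zero.
        simp only [centeredPrimitive.eq_def a b w, mul_sub]
        rw [intervalIntegral.integral_sub (hRv.mul_continuousOn hW) (hRv.mul_const _),
          intervalIntegral.integral_mul_const, integral_centeredPrimitive hv, zero_mul, sub_zero]

end Dirichlet

theorem heat_Top_eq_neg_R_star_R_general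
    (T : (ℝ → ℝ) → ℝ → ℝ)
    (hT : ∀ (v : ℝ → ℝ) (s : ℝ),
      T v s = (∫ θ in (0 : ℝ)..s, θ * (s - 1) * v θ) + ∫ θ in s..(1 : ℝ), s * (θ - 1) * v θ)
    (R : (ℝ → ℝ) → ℝ → ℝ)
    (hR : ∀ (v : ℝ → ℝ) (s : ℝ), R v s = derivWithin (T v) (Set.Icc 0 1) s)
    (v w : ℝ → ℝ) (hv : IntervalIntegrable v volume 0 1) (hw : IntervalIntegrable w volume 0 1) :
    ∫ s in (0 : ℝ)..1, T v s * w s = -∫ s in (0 : ℝ)..1, R v s * R w s := by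
  have T_eq (u : ℝ → ℝ) : T u = dirichletGreen 0 1 u := by
    ext s
    simp only [hT, dirichletGreen, sub_zero, div_one]
  have R_eq {u : ℝ → ℝ} (hu : IntervalIntegrable u volume 0 1) {s : ℝ} (hs : s ∈ uIcc 0 1) :
      R u s = centeredPrimitive 0 1 u s := by
    rw [uIcc_of_le zero_le_one] at hs
    rw [hR, T_eq, derivWithin_dirichletGreen zero_lt_one hu hs]
  rw [T_eq, integral_dirichletGreen_mul zero_ne_one hv hw]
  exact congrArg Neg.neg <| intervalIntegral.integral_congr fun s hs ↦ by
    simp only [R_eq hv hs, R_eq hw hs]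

/-- the identity `T = −R*R` of the paper's reverse-time heat-equation
argument: `⟨T v, w⟩_{L²} = −⟨R v, R w⟩_{L²}` where `R = ∂ₛ ∘ T`. -/
theorem heat_Top_eq_neg_R_star_R
    (T : (ℝ → ℝ) → ℝ → ℝ)
    (hT : ∀ (v : ℝ → ℝ) (s : ℝ),
      T v s = (∫ θ in (0:ℝ)..s, θ * (s - 1) * v θ) + ∫ θ in s..(1:ℝ), s * (θ - 1) * v θ)
    (R : (ℝ → ℝ) → ℝ → ℝ)
    (hR : ∀ (v : ℝ → ℝ) (s : ℝ), R v s = derivWithin (T v) (Set.Icc 0 1) s)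
    (v w : ℝ → ℝ) (hv : ContinuousOn v (Set.Icc 0 1)) (hw : ContinuousOn w (Set.Icc 0 1)) :
    ∫ s in (0:ℝ)..1, T v s * w s = -∫ s in (0:ℝ)..1, R v s * R w s :=
  heat_Top_eq_neg_R_star_R_general T hT R hR v w (hv.intervalIntegrable_of_Icc zero_le_one)
    (hw.intervalIntegrable_of_Icc zero_le_one)
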